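/- Fix θ₀ > 1 and let X ∈ {−1,1}ⁿ have the Curie–Weiss distribution P_{θ₀,CW}. Let Q_n be the n×n matrix with Q_n(i,j) = 1/n for i ≠ j and 0 on the diagonal, let t_i := Σ_j Q_n(i,j)X_j, and let θ̂_n denote the maximum pseudo-likelihood estimator, i.e., the unique maximizer over θ ∈ ℝ of θ·XᵀQ_nX − Σ_{i=1}^n log cosh(θ t_i), when it exists. Then the maximizer exists with probability tending to 1, and for every t ∈ ℝ, P( θ̂_n exists and √n(θ̂_n − θ₀) ≤ t ) → Φ( t·√R(θ₀) ), where Φ is the standard Gaussian cdf and R(θ₀) := m(θ₀)²·σ²(θ₀); that is, √n(θ̂_n − θ₀) converges in distribution to N(0, R(θ₀)^{-1}). -/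

import Mathlib

open MeasureTheory ProbabilityTheory Filter

noncomputable def spin (b : Bool) : ℝ := if b then 1 else -1

noncomputable def mag (n : ℕ) (x : Fin n → Bool) : ℝ := (∑ i, spin (x i)) / n

/-- Unnormalized Curie–Weiss measure on `{-1,1}ⁿ` (encoded by `Fin n → Bool`). -/
noncomputable def cwUnnorm (n : ℕ) (θ : ℝ) : Measure (Fin n → Bool) :=
  ∑ x : Fin n → Bool,
    ENNReal.ofReal (Real.exp ((n : ℝ) * θ * mag n x ^ 2 / 2)) • Measure.dirac x

/-- The Curie–Weiss model `P_{θ,CW}`. -/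
noncomputable def cwMeasure (n : ℕ) (θ : ℝ) : Measure (Fin n → Bool) :=
  (cwUnnorm n θ Set.univ)⁻¹ • cwUnnorm n θ

/-- The coupling matrix of the Curie–Weiss model: `1/n` off the diagonal, `0` on it. -/
noncomputable def Qcw (n : ℕ) : Matrix (Fin n) (Fin n) ℝ :=
  fun i j => if i = j then 0 else 1 / n

noncomputable def qf {n : ℕ} (B : Matrix (Fin n) (Fin n) ℝ) (v : Fin n → ℝ) : ℝ :=
  ∑ i, ∑ j, v i * B i j * v j

/-- Local fields `t_i = ∑_j Q_n(i,j) X_j`. -/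
noncomputable def tfield (n : ℕ) (x : Fin n → Bool) (i : Fin n) : ℝ :=
  ∑ j, Qcw n i j * spin (x j)

/-- The log pseudo-likelihood objective. -/
noncomputable def PLobj (n : ℕ) (x : Fin n → Bool) (θ : ℝ) : ℝ :=
  θ * qf (Qcw n) (fun i => spin (x i)) - ∑ i, Real.log (Real.cosh (θ * tfield n x i))

/-!
Smoothing `√n * (|M| - m)`, where `M` is the magnetization, by an independent Gaussian gives a law
with an explicit density (the Hubbard–Stratonovich transform): up to a normalizing constant it is
`exp (-n * meanFieldPotential θ w)` at `w = m + v / √n`, apart from an exponentially small error.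
Since the potential restricted to `w ≥ 0` has a unique, nondegenerate minimum at `m`, Laplace's
method gives a Gaussian limit for the smoothed law, and dividing characteristic functions by that of
the smoothing Gaussian gives the central limit theorem for `|M|`.

The pseudo-likelihood is concave, so its maximizer is at most `θ + t / √n` if and only if its
derivative, the score, is nonpositive there. The local fields differ from `M` by at most `1 / n`,
so the score at `τ` is `n * (|M| * (|M| - tanh (τ * |M|)))` up to a bounded error. Linearizing
`tanh` at `θ * m` turns nonpositivity of the score into a half-line event for the Gaussian limit of
`√n * (|M| - m)`. The maximizer exists as soon as `|M|` lies strictly between `1 / √n` and `1`.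
-/

section Tanh

lemma hasDerivAt_tanh (x : ℝ) : HasDerivAt Real.tanh (1 - Real.tanh x ^ 2) x := by
  have h := (Real.hasDerivAt_sinh x).div (Real.hasDerivAt_cosh x) (Real.cosh_pos x).ne'
  rw [show (Real.sinh / Real.cosh : ℝ → ℝ) = Real.tanh from
    funext fun y => (Real.tanh_eq_sinh_div_cosh y).symm] at h
  refine h.congr_deriv ?_
  have := Real.cosh_pos x
  rw [Real.tanh_eq_sinh_div_cosh]
  field_simp

lemma deriv_tanh : deriv Real.tanh = fun x => 1 - Real.tanh x ^ 2 :=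
  funext fun x => (hasDerivAt_tanh x).deriv

lemma differentiable_tanh : Differentiable ℝ Real.tanh :=
  fun x => (hasDerivAt_tanh x).differentiableAt

lemma strictMono_tanh : StrictMono Real.tanh :=
  strictMono_of_deriv_pos fun x => by
    simpa only [deriv_tanh, sub_pos] using Real.tanh_sq_lt_one x

lemma strictConcaveOn_tanh : StrictConcaveOn ℝ (Set.Ici 0) Real.tanh := by
  refine StrictAntiOn.strictConcaveOn_of_deriv (convex_Ici 0)
    differentiable_tanh.continuous.continuousOn ?_
  rw [deriv_tanh, interior_Ici]
  intro x hx y _ hxy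
  have h0 : 0 < Real.tanh x := by simpa using strictMono_tanh (Set.mem_Ioi.1 hx)
  have := strictMono_tanh hxy
  dsimp only
  gcongr

lemma abs_tanh_sub_tanh_le (x y : ℝ) : |Real.tanh x - Real.tanh y| ≤ |x - y| := by
  have hderiv : ∀ z ∈ Set.univ, ‖deriv Real.tanh z‖ ≤ 1 := fun z _ => by
    rw [deriv_tanh, Real.norm_eq_abs, abs_le]
    constructor <;> linarith [Real.tanh_sq_lt_one z, sq_nonneg (Real.tanh z)]
  simpa using Convex.norm_image_sub_le_of_norm_deriv_le (fun z _ => differentiable_tanh z) hderiv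
    convex_univ (Set.mem_univ y) (Set.mem_univ x)

lemma tendsto_tanh_atTop : Tendsto Real.tanh atTop (nhds 1) := by
  have h : Real.tanh = fun x => 1 - Real.exp (-x) / Real.cosh x := by
    funext x
    have := Real.cosh_pos x
    rw [Real.tanh_eq_sinh_div_cosh, eq_sub_iff_add_eq, ← add_div, ← Real.cosh_sub_sinh,
      add_sub_cancel, div_self this.ne']
  have hexp : Tendsto (fun x => Real.exp (-x) / Real.cosh x) atTop (nhds 0) := by
    refine squeeze_zero (fun x => div_nonneg (Real.exp_pos _).le (Real.cosh_pos x).le)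
      (fun x => div_le_self (Real.exp_pos _).le (Real.one_le_cosh x)) ?_
    exact Real.tendsto_exp_neg_atTop_nhds_zero
  rw [h]
  simpa using hexp.const_sub 1

lemma hasDerivAt_log_cosh_mul (c x : ℝ) :
    HasDerivAt (fun x => Real.log (Real.cosh (c * x))) (c * Real.tanh (c * x)) x := by
  have h := ((hasDerivAt_id x).const_mul c).cosh.log (Real.cosh_pos (c * x)).ne'
  refine h.congr_deriv ?_
  rw [Real.tanh_eq_sinh_div_cosh, id]
  ring

end Tanh

section Calculus

lemma sq_le_sub_of_hasDerivAt {f f' : ℝ → ℝ} {s : Set ℝ} {c a w : ℝ} (hs : Convex ℝ s)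
    (ha : a ∈ s) (hw : w ∈ s) (hf : ∀ x ∈ s, HasDerivAt f (f' x) x)
    (hgrowth : ∀ x ∈ s, c * (x - a) ^ 2 ≤ f' x * (x - a)) :
    c / 2 * (w - a) ^ 2 ≤ f w - f a := by
  have hline : ∀ t ∈ Set.Icc (0 : ℝ) 1, a + t * (w - a) ∈ s := fun t ht => by
    simpa [AffineMap.lineMap_apply, add_comm] using hs.lineMap_mem ha hw ht
  have hderiv : ∀ t ∈ Set.Icc (0 : ℝ) 1,
      HasDerivAt (fun t => f (a + t * (w - a)) - c / 2 * (w - a) ^ 2 * t ^ 2)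
        (f' (a + t * (w - a)) * (w - a) - c * t * (w - a) ^ 2) t := fun t ht => by
    have h := (hf _ (hline t ht)).comp t (((hasDerivAt_id t).mul_const (w - a)).const_add a)
    refine (h.sub ((hasDerivAt_pow 2 t).const_mul (c / 2 * (w - a) ^ 2))).congr_deriv ?_
    simp only [one_mul, Nat.cast_ofNat, Nat.add_one_sub_one, pow_one, sub_right_inj]
    ring
  obtain ⟨t, ht, hmvt⟩ := exists_hasDerivAt_eq_slope _ _ zero_lt_one
    (fun t ht => (hderiv t ht).continuousAt.continuousWithinAt)
    (fun t ht => hderiv t (Set.Ioo_subset_Icc_self ht))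
  have hpos : 0 ≤ f' (a + t * (w - a)) * (w - a) - c * t * (w - a) ^ 2 := by
    have := hgrowth _ (hline t (Set.Ioo_subset_Icc_self ht))
    rw [add_sub_cancel_left] at this
    refine nonneg_of_mul_nonneg_left ?_ ht.1
    linarith
  rw [hmvt, sub_zero, div_one, one_mul, add_sub_cancel, zero_mul, add_zero] at hpos
  linarith

lemma tendsto_sub_div_sq_of_hasDerivAt {f f' : ℝ → ℝ} {a b : ℝ}
    (hf : ∀ x, HasDerivAt f (f' x) x) (ha : f' a = 0) (hf' : HasDerivAt f' b a) :
    Tendsto (fun x => (f x - f a) / (x - a) ^ 2) (nhdsWithin a {a}ᶜ) (nhds (b / 2)) := by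
  have hsq : ∀ x, HasDerivAt (fun x => (x - a) ^ 2) (2 * (x - a)) x := fun x => by
    simpa using ((hasDerivAt_id x).sub_const a).fun_pow 2
  refine HasDerivAt.lhopital_zero_nhdsNE
    (Eventually.of_forall fun x => (hf x).sub_const (f a)) (Eventually.of_forall hsq) ?_ ?_ ?_ ?_
  · filter_upwards [self_mem_nhdsWithin] with x hx
    exact mul_ne_zero two_ne_zero (sub_ne_zero.2 hx)
  · simpa using ((hf a).sub_const (f a)).continuousAt.tendsto.mono_left nhdsWithin_le_nhds
  · simpa using (hsq a).continuousAt.tendsto.mono_left nhdsWithin_le_nhds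
  · refine (hf'.tendsto_slope.div_const 2).congr fun x => ?_
    rw [slope_def_field, ha, sub_zero, div_div, mul_comm]

lemma tendsto_natCast_mul_sub_of_hasDerivAt {f f' : ℝ → ℝ} {a b : ℝ}
    (hf : ∀ x, HasDerivAt f (f' x) x) (ha : f' a = 0) (hf' : HasDerivAt f' b a) (v : ℝ) :
    Tendsto (fun n : ℕ => n * (f (a + v / √n) - f a)) atTop (nhds (b / 2 * v ^ 2)) := by
  rcases eq_or_ne v 0 with rfl | hv
  · simp
  have hlim : Tendsto (fun n : ℕ => a + v / √(n : ℝ)) atTop (nhdsWithin a {a}ᶜ) := by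
    refine tendsto_nhdsWithin_iff.2 ⟨?_, ?_⟩
    · simpa using (tendsto_const_nhds.div_atTop
        (Real.tendsto_sqrt_atTop.comp tendsto_natCast_atTop_atTop)).const_add a
    · filter_upwards [eventually_gt_atTop 0] with n hn
      have : (0 : ℝ) < √n := by positivity
      simp [hv, this.ne']
  refine (((tendsto_sub_div_sq_of_hasDerivAt hf ha hf').comp hlim).mul_const (v ^ 2)).congr' ?_
  filter_upwards [eventually_gt_atTop 0] with n hn
  have : (0 : ℝ) < n := by positivity
  simp only [Function.comp, add_sub_cancel_left]
  rw [div_pow, Real.sq_sqrt this.le]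
  field_simp

end Calculus

section Potential

/-- `m` is a spontaneous magnetization at inverse temperature `θ`, i.e. a positive solution of the
mean-field equation. -/
structure IsSpontaneousMag (θ m : ℝ) : Prop where
  pos : 0 < m
  tanh_mul : Real.tanh (θ * m) = m

/-- The mean-field potential obtained by linearising the quadratic energy with a Gaussian
(Hubbard–Stratonovich): the Curie–Weiss partition function is an integral of
`exp (-n * meanFieldPotential θ w)` over `w`. -/
noncomputable def meanFieldPotential (θ w : ℝ) : ℝ := θ * w ^ 2 / 2 - Real.log (Real.cosh (θ * w))

lemma hasDerivAt_meanFieldPotential (θ w : ℝ) :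
    HasDerivAt (meanFieldPotential θ) (θ * (w - Real.tanh (θ * w))) w := by
  have h := (((hasDerivAt_pow 2 w).const_mul θ).div_const 2).sub (hasDerivAt_log_cosh_mul θ w)
  refine h.congr_deriv ?_
  simp only [Nat.cast_ofNat, Nat.add_one_sub_one, pow_one]
  ring

lemma meanFieldPotential_zero (θ : ℝ) : meanFieldPotential θ 0 = 0 := by
  simp [meanFieldPotential]

namespace IsSpontaneousMag

variable {θ m : ℝ}

lemma lt_one (h : IsSpontaneousMag θ m) : m < 1 := h.tanh_mul ▸ Real.tanh_lt_one _

lemma theta_mul_pos (h : IsSpontaneousMag θ m) : 0 < θ * m := by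
  rw [← strictMono_tanh.lt_iff_lt, Real.tanh_zero, h.tanh_mul]
  exact h.pos

lemma theta_pos (h : IsSpontaneousMag θ m) : 0 < θ := pos_of_mul_pos_left h.theta_mul_pos h.pos.le

lemma curvature_pos (h : IsSpontaneousMag θ m) : 0 < 1 - θ * (1 - m ^ 2) := by
  have hslope := strictConcaveOn_tanh.lt_slope_of_hasDerivAt Set.self_mem_Ici
    (Set.mem_Ici.2 h.theta_mul_pos.le) h.theta_mul_pos (hasDerivAt_tanh (θ * m))
  have hm := h.pos
  have hθ := h.theta_pos
  rw [slope_def_field, Real.tanh_zero, h.tanh_mul, sub_zero, sub_zero,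
    lt_div_iff₀ h.theta_mul_pos] at hslope
  nlinarith

lemma lt_tanh_mul (h : IsSpontaneousMag θ m) {x : ℝ} (hx : 0 < x) (hxm : x < m) :
    x < Real.tanh (θ * x) := by
  have hm := h.pos
  have hθm := h.theta_mul_pos
  have hconc := strictConcaveOn_tanh.2 Set.self_mem_Ici (Set.mem_Ici.2 hθm.le) hθm.ne
    (sub_pos.2 ((div_lt_one hm).2 hxm)) (div_pos hx hm) (sub_add_cancel _ _)
  have hscale : x / m * (θ * m) = θ * x := by field_simp
  simpa only [smul_eq_mul, mul_zero, zero_add, Real.tanh_zero, h.tanh_mul, hscale,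
    div_mul_cancel₀ x hm.ne'] using hconc

lemma exists_sq_le_meanFieldPotential_sub_of_half_le (h : IsSpontaneousMag θ m) :
    ∃ c > 0, ∀ w, m / 2 ≤ w →
      c * (w - m) ^ 2 ≤ meanFieldPotential θ w - meanFieldPotential θ m := by
  have hm := h.pos
  have hθ := h.theta_pos
  have hmem : ∀ x, m / 2 ≤ x → θ * x ∈ Set.Ici (0 : ℝ) := fun x hx =>
    Set.mem_Ici.2 (mul_nonneg hθ.le ((half_pos hm).le.trans hx))
  -- By concavity, no chord of `tanh` from `θ * m` to a point of `[θ * m / 2, ∞)` is steeper than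
  -- the chord to the left endpoint, whose slope `r` satisfies `θ * r < 1`.
  set r := slope Real.tanh (θ * m) (θ * (m / 2)) with hr
  have hθr : 0 < 1 - θ * r := by
    rw [hr, slope_def_field, h.tanh_mul, sub_pos]
    have := h.lt_tanh_mul (half_pos hm) (half_lt_self hm)
    rw [show θ * (m / 2) - θ * m = -(θ * m / 2) by ring, div_neg, ← neg_div, mul_div_assoc',
      div_lt_one (half_pos h.theta_mul_pos)]
    nlinarith
  have hgrowth : ∀ x ∈ Set.Ici (m / 2),
      θ * (1 - θ * r) * (x - m) ^ 2 ≤ θ * (x - Real.tanh (θ * x)) * (x - m) := by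
    intro x hx
    rcases eq_or_ne x m with rfl | hxm
    · simp
    have hne : θ * x ≠ θ * m := fun e => hxm (mul_left_cancel₀ hθ.ne' e)
    have hanti : slope Real.tanh (θ * m) (θ * x) ≤ r :=
      strictConcaveOn_tanh.concaveOn.slope_anti (Set.mem_Ici.2 h.theta_mul_pos.le)
        ⟨hmem _ le_rfl, by simp [hθ.ne', (half_lt_self hm).ne]⟩
        ⟨hmem x hx, hne⟩ (mul_le_mul_of_nonneg_left hx hθ.le)
    have htanh : Real.tanh (θ * x) = m + slope Real.tanh (θ * m) (θ * x) * (θ * (x - m)) := by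
      rw [slope_def_field, h.tanh_mul, ← mul_sub,
        div_mul_cancel₀ _ (mul_ne_zero hθ.ne' (sub_ne_zero.2 hxm)), add_sub_cancel]
    rw [htanh]
    nlinarith [mul_le_mul_of_nonneg_right hanti (mul_nonneg (sq_nonneg θ) (sq_nonneg (x - m)))]
  exact ⟨θ * (1 - θ * r) / 2, by positivity, fun w hw => sq_le_sub_of_hasDerivAt
    (convex_Ici (m / 2)) (half_le_self hm.le) hw
    (fun x _ => hasDerivAt_meanFieldPotential θ x) hgrowth⟩

lemma antitoneOn_meanFieldPotential (h : IsSpontaneousMag θ m) :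
    AntitoneOn (meanFieldPotential θ) (Set.Icc 0 m) := by
  have hderiv := hasDerivAt_meanFieldPotential θ
  refine antitoneOn_of_deriv_nonpos (convex_Icc 0 m)
    (fun x _ => (hderiv x).continuousAt.continuousWithinAt)
    (fun x _ => (hderiv x).differentiableAt.differentiableWithinAt) fun x hx => ?_
  rw [interior_Icc] at hx
  rw [(hderiv x).deriv]
  exact mul_nonpos_of_nonneg_of_nonpos h.theta_pos.le
    (sub_nonpos.2 (h.lt_tanh_mul hx.1 hx.2).le)

lemma exists_sq_le_meanFieldPotential_sub (h : IsSpontaneousMag θ m) :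
    ∃ c > 0, ∀ w, 0 ≤ w →
      c * (w - m) ^ 2 ≤ meanFieldPotential θ w - meanFieldPotential θ m := by
  obtain ⟨c, hc, hgrowth⟩ := h.exists_sq_le_meanFieldPotential_sub_of_half_le
  have hm := h.pos
  refine ⟨c / 4, by positivity, fun w hw => ?_⟩
  rcases le_total (m / 2) w with hmw | hwm
  · nlinarith [hgrowth w hmw, sq_nonneg (w - m)]
  · have hhalf := hgrowth (m / 2) le_rfl
    have hanti := h.antitoneOn_meanFieldPotential ⟨hw, by linarith⟩ ⟨by positivity, by linarith⟩ hwm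
    have hsq : (w - m) ^ 2 ≤ 4 * (m / 2 - m) ^ 2 := by nlinarith
    nlinarith

lemma meanFieldPotential_neg (h : IsSpontaneousMag θ m) : meanFieldPotential θ m < 0 := by
  obtain ⟨c, hc, hgrowth⟩ := h.exists_sq_le_meanFieldPotential_sub
  have hzero := hgrowth 0 le_rfl
  rw [meanFieldPotential_zero, zero_sub, zero_sub, neg_sq] at hzero
  have : 0 < c * m ^ 2 := by have := h.pos; positivity
  linarith

lemma tendsto_natCast_mul_meanFieldPotential_sub (h : IsSpontaneousMag θ m) (v : ℝ) :
    Tendsto (fun n : ℕ => n * (meanFieldPotential θ (m + v / √n) - meanFieldPotential θ m)) atTop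
      (nhds (θ * (1 - θ * (1 - m ^ 2)) / 2 * v ^ 2)) := by
  refine tendsto_natCast_mul_sub_of_hasDerivAt (hasDerivAt_meanFieldPotential θ)
    (by rw [h.tanh_mul, sub_self, mul_zero]) ?_ v
  have htanh := (hasDerivAt_tanh (θ * m)).comp m ((hasDerivAt_id m).const_mul θ)
  refine (((hasDerivAt_id m).sub htanh).const_mul θ).congr_deriv ?_
  rw [h.tanh_mul]
  ring

end IsSpontaneousMag

end Potential

section CurieWeissMeasure

instance isFiniteMeasure_cwUnnorm (n : ℕ) (θ : ℝ) : IsFiniteMeasure (cwUnnorm n θ) := by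
  refine ⟨?_⟩
  simp [cwUnnorm, ENNReal.sum_lt_top]

instance neZero_cwUnnorm (n : ℕ) (θ : ℝ) : NeZero (cwUnnorm n θ) := by
  refine ⟨Measure.measure_univ_ne_zero.1 ?_⟩
  simp [cwUnnorm, Real.exp_pos]

instance isProbabilityMeasure_cwMeasure (n : ℕ) (θ : ℝ) : IsProbabilityMeasure (cwMeasure n θ) :=
  isProbabilityMeasureSMul

lemma integral_cwUnnorm (n : ℕ) (θ : ℝ) (f : (Fin n → Bool) → ℝ) :
    ∫ x, f x ∂cwUnnorm n θ = ∑ x, Real.exp (n * θ * mag n x ^ 2 / 2) * f x := by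
  rw [cwUnnorm, integral_finsetSum_measure fun x _ =>
    (integrable_dirac (by simp)).smul_measure (by simp)]
  simp only [integral_smul_measure, integral_dirac, ENNReal.toReal_ofReal (Real.exp_pos _).le,
    smul_eq_mul]

lemma natCast_mul_mag (n : ℕ) (x : Fin n → Bool) : n * mag n x = ∑ i, spin (x i) := by
  rcases n.eq_zero_or_pos with rfl | hn
  · simp
  · rw [mag, mul_div_cancel₀ _ (by positivity)]

lemma sum_exp_mul_sum_spin (n : ℕ) (z : ℝ) :
    ∑ x : Fin n → Bool, Real.exp (z * ∑ i, spin (x i)) = (2 * Real.cosh z) ^ n := by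
  have hsite : ∑ b, Real.exp (z * spin b) = 2 * Real.cosh z := by
    rw [Fintype.sum_bool, spin, spin, if_pos rfl, if_neg Bool.false_ne_true, Real.cosh_eq, mul_one,
      mul_neg_one]
    ring
  simp only [Finset.mul_sum, Real.exp_sum]
  rw [← hsite, Fintype.sum_pow]

/-- The unnormalized moment generating function of `|∑ i, spin (x i)|` for independent fair
spins. -/
noncomputable def absSpinMGF (n : ℕ) (z : ℝ) : ℝ :=
  ∑ x : Fin n → Bool, Real.exp (z * (n * |mag n x|))

lemma absSpinMGF_nonneg (n : ℕ) (z : ℝ) : 0 ≤ absSpinMGF n z :=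
  Finset.sum_nonneg fun _ _ => (Real.exp_pos _).le

lemma absSpinMGF_le_two_pow (n : ℕ) {z : ℝ} (hz : z ≤ 0) : absSpinMGF n z ≤ 2 ^ n := by
  have hterm : ∀ x ∈ (Finset.univ : Finset (Fin n → Bool)), Real.exp (z * (n * |mag n x|)) ≤ 1 :=
    fun x _ => Real.exp_le_one_iff.2 (mul_nonpos_of_nonpos_of_nonneg hz (by positivity))
  simpa [absSpinMGF] using Finset.sum_le_sum hterm

lemma absSpinMGF_add_neg (n : ℕ) (z : ℝ) :
    absSpinMGF n z + absSpinMGF n (-z) = 2 * (2 * Real.cosh z) ^ n := by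
  have hcosh : absSpinMGF n z + absSpinMGF n (-z) =
      ∑ x : Fin n → Bool, Real.exp (z * ∑ i, spin (x i)) +
        ∑ x : Fin n → Bool, Real.exp (-z * ∑ i, spin (x i)) := by
    simp only [absSpinMGF, ← Finset.sum_add_distrib, ← natCast_mul_mag]
    refine Finset.sum_congr rfl fun x _ => ?_
    rcases abs_choice (mag n x) with h | h <;> rw [h]
    rw [mul_neg, mul_neg, neg_mul_neg, add_comm, neg_mul]
  rw [hcosh, sum_exp_mul_sum_spin, sum_exp_mul_sum_spin, Real.cosh_neg, ← two_mul]

end CurieWeissMeasure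

section SmoothedDensity

variable {θ m : ℝ}

/-- The density at `w`, up to a constant, of `|mag n x| + N(0, 1 / (n * θ))` under `cwMeasure n θ`.
The normalization makes it converge at scale `1 / √n` around a minimizer `m` of the mean-field
potential. -/
noncomputable def smoothedDensity (θ m : ℝ) (n : ℕ) (w : ℝ) : ℝ :=
  absSpinMGF n (θ * w) * Real.exp (-(n * θ * w ^ 2 / 2)) *
    (Real.exp (n * meanFieldPotential θ m) / (2 * 2 ^ n))

lemma smoothedDensity_nonneg (θ m : ℝ) (n : ℕ) (w : ℝ) : 0 ≤ smoothedDensity θ m n w := by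
  have := absSpinMGF_nonneg n (θ * w)
  unfold smoothedDensity
  positivity

lemma smoothedDensity_add_neg (θ m : ℝ) (n : ℕ) (w : ℝ) :
    smoothedDensity θ m n w + smoothedDensity θ m n (-w) =
      Real.exp (-(n * (meanFieldPotential θ w - meanFieldPotential θ m))) := by
  have hcosh : Real.cosh (θ * w) ^ n = Real.exp (n * Real.log (Real.cosh (θ * w))) := by
    rw [Real.exp_nat_mul, Real.exp_log (Real.cosh_pos _)]
  have hexp : Real.exp (-(n * (meanFieldPotential θ w - meanFieldPotential θ m))) =
      Real.exp (n * Real.log (Real.cosh (θ * w))) * Real.exp (-(n * θ * w ^ 2 / 2)) *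
        Real.exp (n * meanFieldPotential θ m) := by
    rw [← Real.exp_add, ← Real.exp_add, meanFieldPotential.eq_def θ w]
    congr 1
    ring
  rw [smoothedDensity, smoothedDensity, neg_sq, mul_neg, ← add_mul, ← add_mul, absSpinMGF_add_neg,
    mul_pow, hcosh, hexp]
  field_simp

lemma smoothedDensity_le (θ m : ℝ) (n : ℕ) (w : ℝ) :
    smoothedDensity θ m n w ≤
      Real.exp (-(n * (meanFieldPotential θ w - meanFieldPotential θ m))) := by
  rw [← smoothedDensity_add_neg]
  exact le_add_of_nonneg_right (smoothedDensity_nonneg θ m n (-w))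

lemma smoothedDensity_le_of_nonpos (hθ : 0 ≤ θ) (m : ℝ) (n : ℕ) {w : ℝ} (hw : w ≤ 0) :
    smoothedDensity θ m n w ≤ Real.exp (-(n * (θ * w ^ 2 / 2 - meanFieldPotential θ m))) := by
  have hmgf := absSpinMGF_le_two_pow n (mul_nonpos_of_nonneg_of_nonpos hθ hw)
  calc smoothedDensity θ m n w
      ≤ 2 ^ n * Real.exp (-(n * θ * w ^ 2 / 2)) *
          (Real.exp (n * meanFieldPotential θ m) / (1 * 2 ^ n)) := by
        unfold smoothedDensity
        gcongr
        norm_num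
    _ = Real.exp (-(n * (θ * w ^ 2 / 2 - meanFieldPotential θ m))) := by
        rw [show -(n * (θ * w ^ 2 / 2 - meanFieldPotential θ m)) =
          -(n * θ * w ^ 2 / 2) + n * meanFieldPotential θ m by ring, Real.exp_add]
        field_simp

lemma le_smoothedDensity_of_nonneg (hθ : 0 ≤ θ) (m : ℝ) (n : ℕ) {w : ℝ} (hw : 0 ≤ w) :
    Real.exp (-(n * (meanFieldPotential θ w - meanFieldPotential θ m))) -
      Real.exp (n * meanFieldPotential θ m) ≤ smoothedDensity θ m n w := by
  rw [← smoothedDensity_add_neg, sub_le_iff_le_add, add_le_add_iff_left]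
  refine (smoothedDensity_le_of_nonpos hθ m n (neg_nonpos.2 hw)).trans (Real.exp_le_exp.2 ?_)
  have : 0 ≤ n * (θ * (-w) ^ 2 / 2) := by positivity
  linarith

lemma IsSpontaneousMag.exists_smoothedDensity_le (h : IsSpontaneousMag θ m) :
    ∃ c > 0, ∀ (n : ℕ) (w : ℝ), smoothedDensity θ m n w ≤ Real.exp (-(n * (c * (w - m) ^ 2))) := by
  obtain ⟨c, hc, hgrowth⟩ := h.exists_sq_le_meanFieldPotential_sub
  have hθ := h.theta_pos
  have hzero : c * m ^ 2 ≤ -meanFieldPotential θ m := by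
    simpa [meanFieldPotential_zero] using hgrowth 0 le_rfl
  set d := min (θ / 4) (c / 2)
  have hdθ : d ≤ θ / 4 := min_le_left _ _
  have hdc : d ≤ c / 2 := min_le_right _ _
  refine ⟨d, by positivity, fun n w => ?_⟩
  rcases le_total 0 w with hw | hw
  · refine (smoothedDensity_le θ m n w).trans ?_
    gcongr
    refine le_trans ?_ (hgrowth w hw)
    gcongr
    linarith
  · refine (smoothedDensity_le_of_nonpos hθ.le m n hw).trans ?_
    gcongr
    calc d * (w - m) ^ 2 ≤ d * (2 * (w ^ 2 + m ^ 2)) := by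
          gcongr
          nlinarith [sq_nonneg (w + m)]
      _ = 2 * (d * w ^ 2) + 2 * (d * m ^ 2) := by ring
      _ ≤ 2 * (θ / 4 * w ^ 2) + 2 * (c / 2 * m ^ 2) := by gcongr
      _ ≤ θ * w ^ 2 / 2 - meanFieldPotential θ m := by linarith

lemma IsSpontaneousMag.exists_smoothedDensity_rescaled_le (h : IsSpontaneousMag θ m) :
    ∃ c > 0, ∀ n : ℕ, 0 < n → ∀ v : ℝ,
      smoothedDensity θ m n (m + v / √n) ≤ Real.exp (-c * v ^ 2) := by
  obtain ⟨c, hc, hbound⟩ := h.exists_smoothedDensity_le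
  refine ⟨c, hc, fun n hn v => (hbound n _).trans_eq ?_⟩
  rw [add_sub_cancel_left, div_pow, Real.sq_sqrt n.cast_nonneg]
  congr 1
  field_simp

lemma IsSpontaneousMag.tendsto_smoothedDensity_rescaled (h : IsSpontaneousMag θ m) (v : ℝ) :
    Tendsto (fun n : ℕ => smoothedDensity θ m n (m + v / √n)) atTop
      (nhds (Real.exp (-(θ * (1 - θ * (1 - m ^ 2)) / 2) * v ^ 2))) := by
  have hupper : Tendsto (fun n : ℕ => Real.exp (-(n *
      (meanFieldPotential θ (m + v / √n) - meanFieldPotential θ m)))) atTop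
      (nhds (Real.exp (-(θ * (1 - θ * (1 - m ^ 2)) / 2) * v ^ 2))) := by
    rw [neg_mul]
    exact (Real.continuous_exp.tendsto _).comp (h.tendsto_natCast_mul_meanFieldPotential_sub v).neg
  have herror : Tendsto (fun n : ℕ => Real.exp (n * meanFieldPotential θ m)) atTop (nhds 0) :=
    Real.tendsto_exp_atBot.comp
      (tendsto_natCast_atTop_atTop.atTop_mul_const_of_neg h.meanFieldPotential_neg)
  have hw : ∀ᶠ n : ℕ in atTop, 0 ≤ m + v / √(n : ℝ) := by
    have hlim := (tendsto_const_nhds.div_atTop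
      (Real.tendsto_sqrt_atTop.comp tendsto_natCast_atTop_atTop) (a := v)).const_add m
    rw [add_zero] at hlim
    exact (hlim.eventually (lt_mem_nhds h.pos)).mono fun _ => le_of_lt
  refine tendsto_of_tendsto_of_tendsto_of_le_of_le' (by simpa using hupper.sub herror) hupper
    (hw.mono fun n hn => le_smoothedDensity_of_nonneg h.theta_pos.le m n hn)
    (Eventually.of_forall fun n => smoothedDensity_le θ m n _)

lemma exists_integral_exp_cwMeasure_eq_smoothedDensity (θ m : ℝ) {n : ℕ} (hn : 0 < n) :
    ∃ C : ℝ, ∀ v : ℝ,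
      ∫ x, Real.exp (-(θ / 2) * (v - √n * (|mag n x| - m)) ^ 2) ∂cwMeasure n θ =
        C * smoothedDensity θ m n (m + v / √n) := by
  have hsqrt : (0 : ℝ) < √n := by positivity
  have hterm : ∀ v x, Real.exp (n * θ * mag n x ^ 2 / 2) *
      Real.exp (-(θ / 2) * (v - √n * (|mag n x| - m)) ^ 2) =
      Real.exp (-(n * θ * (m + v / √n) ^ 2 / 2)) *
        Real.exp (θ * (m + v / √n) * (n * |mag n x|)) := fun v x => by
    rw [← Real.exp_add, ← Real.exp_add, ← sq_abs (mag n x)]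
    obtain ⟨w, rfl⟩ : ∃ w, v = √n * (w - m) := ⟨m + v / √n, by field_simp; ring⟩
    rw [mul_div_cancel_left₀ _ hsqrt.ne', ← mul_sub, mul_pow, Real.sq_sqrt n.cast_nonneg]
    congr 1
    ring
  refine ⟨((cwUnnorm n θ Set.univ)⁻¹).toReal *
    (2 * 2 ^ n / Real.exp (n * meanFieldPotential θ m)), fun v => ?_⟩
  rw [cwMeasure, integral_smul_measure, integral_cwUnnorm, Finset.sum_congr rfl
    fun x _ => hterm v x, ← Finset.mul_sum, smul_eq_mul, smoothedDensity, absSpinMGF]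
  field_simp

end SmoothedDensity

section GaussianSmoothing

lemma integrable_prod_gaussianPDFReal (μ : Measure ℝ) [IsFiniteMeasure μ] {s : NNReal}
    (hs : s ≠ 0) :
    Integrable (fun p : ℝ × ℝ => gaussianPDFReal p.2 s p.1) (volume.prod μ) := by
  have hmeas : Measurable fun p : ℝ × ℝ => gaussianPDFReal p.2 s p.1 := by
    unfold gaussianPDFReal
    fun_prop
  refine (integrable_prod_iff' hmeas.aestronglyMeasurable).2
    ⟨Eventually.of_forall fun u => integrable_gaussianPDFReal u s, ?_⟩
  simp only [Real.norm_of_nonneg (gaussianPDFReal_nonneg _ _ _),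
    integral_gaussianPDFReal_eq_one _ hs]
  exact integrable_const 1

lemma integral_cexp_mul_gaussianSmoothing (μ : Measure ℝ) [IsFiniteMeasure μ] {s : NNReal}
    (hs : s ≠ 0) (ξ : ℝ) :
    ∫ v : ℝ, Complex.exp (ξ * v * Complex.I) * ((∫ u, gaussianPDFReal u s v ∂μ : ℝ) : ℂ) =
      charFun μ ξ * Complex.exp (-(s * ξ ^ 2 / 2)) := by
  have hintegrable : Integrable (Function.uncurry fun v u : ℝ =>
      Complex.exp (ξ * v * Complex.I) * (gaussianPDFReal u s v : ℂ)) (volume.prod μ) := by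
    refine (integrable_prod_gaussianPDFReal μ hs).ofReal.bdd_mul (c := 1)
      (Continuous.aestronglyMeasurable (by fun_prop)) (Eventually.of_forall fun p => ?_)
    rw [← Complex.ofReal_mul, Complex.norm_exp_ofReal_mul_I]
  have hkernel : ∀ u : ℝ, ∫ v : ℝ, Complex.exp (ξ * v * Complex.I) * (gaussianPDFReal u s v : ℂ) =
      Complex.exp (ξ * u * Complex.I) * Complex.exp (-(s * ξ ^ 2 / 2)) := fun u => by
    rw [← Complex.exp_add, ← sub_eq_add_neg, ← charFun_gaussianReal, charFun_apply_real,
      integral_gaussianReal_eq_integral_smul hs]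
    simp only [Complex.real_smul, mul_comm]
  calc ∫ v : ℝ, Complex.exp (ξ * v * Complex.I) * ((∫ u, gaussianPDFReal u s v ∂μ : ℝ) : ℂ)
      = ∫ v : ℝ, ∫ u, Complex.exp (ξ * v * Complex.I) * (gaussianPDFReal u s v : ℂ) ∂μ := by
        simp only [integral_const_mul, integral_complex_ofReal]
    _ = ∫ u, (∫ v : ℝ, Complex.exp (ξ * v * Complex.I) * (gaussianPDFReal u s v : ℂ)) ∂μ :=
        integral_integral_swap hintegrable
    _ = charFun μ ξ * Complex.exp (-(s * ξ ^ 2 / 2)) := by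
        simp only [hkernel, integral_mul_const, charFun_apply_real]

lemma tendsto_integral_cexp_mul_of_dominated {H : ℕ → ℝ → ℝ} {h bound : ℝ → ℝ}
    (hbound : Integrable bound) (hmeas : ∀ n, AEStronglyMeasurable (H n))
    (hle : ∀ᶠ n in atTop, ∀ v, |H n v| ≤ bound v)
    (hlim : ∀ v, Tendsto (fun n => H n v) atTop (nhds (h v))) (ξ : ℝ) :
    Tendsto (fun n => ∫ v : ℝ, Complex.exp (ξ * v * Complex.I) * (H n v : ℂ)) atTop
      (nhds (∫ v : ℝ, Complex.exp (ξ * v * Complex.I) * (h v : ℂ))) := by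
  refine tendsto_integral_filter_of_dominated_convergence bound
    (Eventually.of_forall fun n => ?_) (hle.mono fun n hn => Eventually.of_forall fun v => ?_)
    hbound (Eventually.of_forall fun v => ?_)
  · exact (Continuous.aestronglyMeasurable (by fun_prop)).mul
      (Complex.continuous_ofReal.comp_aestronglyMeasurable (hmeas n))
  · rw [norm_mul, ← Complex.ofReal_mul, Complex.norm_exp_ofReal_mul_I, one_mul, Complex.norm_real]
    exact hn v
  · exact ((Complex.continuous_ofReal.tendsto _).comp (hlim v)).const_mul _

-- Dividing by the Fourier transform at `0` eliminates the unknown constants `C n`.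
lemma tendsto_charFun_of_tendsto_gaussianSmoothing {μ : ℕ → Measure ℝ}
    [∀ n, IsProbabilityMeasure (μ n)] {s t : NNReal} (hs : s ≠ 0) {C : ℕ → ℝ} {H : ℕ → ℝ → ℝ}
    {A : ℝ} (hA : A ≠ 0) {bound : ℝ → ℝ} (hbound : Integrable bound)
    (hmeas : ∀ n, AEStronglyMeasurable (H n))
    (hsmooth : ∀ᶠ n in atTop, ∀ v, ∫ u, gaussianPDFReal u s v ∂μ n = C n * H n v)
    (hle : ∀ᶠ n in atTop, ∀ v, |H n v| ≤ bound v)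
    (hlim : ∀ v, Tendsto (fun n => H n v) atTop (nhds (A * gaussianPDFReal 0 (s + t) v))) (ξ : ℝ) :
    Tendsto (fun n => charFun (μ n) ξ) atTop (nhds (charFun (gaussianReal 0 t) ξ)) := by
  set J : ℕ → ℝ → ℂ := fun n ξ => ∫ v : ℝ, Complex.exp (ξ * v * Complex.I) * (H n v : ℂ)
  have hJlim : ∀ ξ : ℝ, Tendsto (fun n => J n ξ) atTop
      (nhds (A * charFun (gaussianReal 0 (s + t)) ξ)) := fun ξ => by
    convert tendsto_integral_cexp_mul_of_dominated hbound hmeas hle hlim ξ using 2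
    rw [charFun_apply_real, integral_gaussianReal_eq_integral_smul (by simp [hs]),
      ← integral_const_mul]
    simp only [Complex.real_smul, Complex.ofReal_mul, mul_left_comm, mul_comm]
  have hJ : ∀ᶠ n in atTop, ∀ ξ : ℝ,
      C n * J n ξ = charFun (μ n) ξ * Complex.exp (-(s * ξ ^ 2 / 2)) :=
    hsmooth.mono fun n hn ξ => by
    rw [← integral_cexp_mul_gaussianSmoothing (μ n) hs ξ, ← integral_const_mul]
    simp only [hn, Complex.ofReal_mul, mul_left_comm]
  have hratio : Tendsto (fun n => J n ξ / J n 0 / Complex.exp (-(s * ξ ^ 2 / 2))) atTop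
      (nhds (charFun (gaussianReal 0 t) ξ)) := by
    have h0 : (A : ℂ) * charFun (gaussianReal 0 (s + t)) 0 ≠ 0 := by simp [hA]
    have hquot := ((hJlim ξ).div (hJlim 0) h0).div_const (Complex.exp (-(s * ξ ^ 2 / 2)))
    rw [charFun_zero, charFun_gaussianReal, probReal_univ, Complex.ofReal_one, mul_one,
      mul_div_cancel_left₀ _ (Complex.ofReal_ne_zero.2 hA), ← Complex.exp_sub] at hquot
    rw [charFun_gaussianReal]
    convert! hquot using 3
    push_cast
    ring
  refine hratio.congr' (hJ.mono fun n hn => ?_)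
  have hn0 : C n * J n 0 = 1 := by simpa using hn 0
  have hC : (C n : ℂ) ≠ 0 := left_ne_zero_of_mul_eq_one hn0
  dsimp only
  rw [← mul_div_mul_left (J n ξ) (J n 0) hC, hn0, hn, div_one,
    mul_div_cancel_right₀ _ (Complex.exp_ne_zero _)]

end GaussianSmoothing

section ConvergenceInDistribution

variable {ι E Ω' : Type*} {Ω : ι → Type*} [∀ i, MeasurableSpace (Ω i)] [MeasurableSpace Ω']
  {P : (i : ι) → Measure (Ω i)} [∀ i, IsProbabilityMeasure (P i)] {P' : Measure Ω'}
  [IsProbabilityMeasure P'] [MeasurableSpace E] {X Y : (i : ι) → Ω i → E} {Z : Ω' → E}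
  {l : Filter ι}

lemma tendsto_measure_preimage_of_tendstoInDistribution [TopologicalSpace E]
    [OpensMeasurableSpace E] [HasOuterApproxClosed E] (h : TendstoInDistribution X l Z P P')
    {s : Set E} (hs : MeasurableSet s) (hfrontier : P' (Z ⁻¹' frontier s) = 0) :
    Tendsto (fun i => P i (X i ⁻¹' s)) l (nhds (P' (Z ⁻¹' s))) := by
  have hlim := ProbabilityMeasure.tendsto_measure_of_null_frontier_of_tendsto' h.tendsto (E := s)
    ((Measure.map_apply_of_aemeasurable h.aemeasurable_limit
      isClosed_frontier.measurableSet).trans hfrontier)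
  simpa only [ProbabilityMeasure.coe_mk, Measure.map_apply_of_aemeasurable h.aemeasurable_limit hs,
    Measure.map_apply_of_aemeasurable (h.forall_aemeasurable _) hs] using hlim

lemma tendstoInDistribution_of_dist_le [PseudoMetricSpace E] [OpensMeasurableSpace E]
    [l.IsCountablyGenerated] {ε : ι → ℝ} (h : TendstoInDistribution X l Z P P')
    (hY : ∀ i, AEMeasurable (Y i) (P i)) (hdist : ∀ᶠ i in l, ∀ ω, dist (Y i ω) (X i ω) ≤ ε i)
    (hε : Tendsto ε l (nhds 0)) : TendstoInDistribution Y l Z P P' := by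
  refine ⟨hY, h.aemeasurable_limit, tendsto_iff_forall_lipschitz_integral_tendsto.2 ?_⟩
  rintro f ⟨C, hC⟩ ⟨L, hL⟩
  have hf : Measurable f := hL.continuous.measurable
  have hXf := tendsto_iff_forall_lipschitz_integral_tendsto.1 h.tendsto f ⟨C, hC⟩ ⟨L, hL⟩
  have hmap : ∀ {W : (i : ι) → Ω i → E}, (∀ i, AEMeasurable (W i) (P i)) → ∀ i,
      ∫ e, f e ∂((P i).map (W i)) = ∫ ω, f (W i ω) ∂P i := fun hW i =>
    integral_map (hW i) hf.aestronglyMeasurable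
  have hintegrable : ∀ {W : (i : ι) → Ω i → E}, (∀ i, AEMeasurable (W i) (P i)) → ∀ i,
      Integrable (fun ω => f (W i ω)) (P i) := fun {W} hW i => by
    obtain ⟨ω₀⟩ := nonempty_of_isProbabilityMeasure (P i)
    refine .of_bound (hf.comp_aemeasurable (hW i)).aestronglyMeasurable (‖f (W i ω₀)‖ + C)
      (Eventually.of_forall fun ω => ?_)
    linarith [norm_le_norm_add_norm_sub' (f (W i ω)) (f (W i ω₀)), hC (W i ω) (W i ω₀),
      Real.dist_eq (f (W i ω)) (f (W i ω₀)), Real.norm_eq_abs (f (W i ω) - f (W i ω₀))]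
  have hdiff : Tendsto (fun i => ∫ ω, f (Y i ω) ∂P i - ∫ ω, f (X i ω) ∂P i) l (nhds 0) := by
    refine squeeze_zero_norm' (hdist.mono fun i hi => ?_) (by simpa using hε.const_mul (L : ℝ))
    rw [← integral_sub (hintegrable hY i) (hintegrable h.forall_aemeasurable i)]
    refine (norm_integral_le_of_norm_le_const (C := L * ε i)
      (Eventually.of_forall fun ω => ?_)).trans_eq (by simp)
    exact (hL.dist_le_mul _ _).trans (by gcongr; exact hi ω)
  simpa [hmap hY, hmap h.forall_aemeasurable] using hdiff.add hXf

end ConvergenceInDistribution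

section MagnetizationCLT

/-- The variance `σ²(θ)` of the limiting Gaussian fluctuations of the magnetization around a
spontaneous magnetization `m`. -/
noncomputable def magVariance (θ m : ℝ) : ℝ := (1 - m ^ 2) / (1 - θ * (1 - m ^ 2))

variable {θ m : ℝ}

lemma IsSpontaneousMag.one_sub_sq_pos (h : IsSpontaneousMag θ m) : 0 < 1 - m ^ 2 :=
  sub_pos.2 (pow_lt_one₀ h.pos.le h.lt_one two_ne_zero)

lemma IsSpontaneousMag.magVariance_pos (h : IsSpontaneousMag θ m) : 0 < magVariance θ m :=
  div_pos h.one_sub_sq_pos h.curvature_pos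

lemma IsSpontaneousMag.inv_add_magVariance (h : IsSpontaneousMag θ m) :
    θ⁻¹ + magVariance θ m = (θ * (1 - θ * (1 - m ^ 2)))⁻¹ := by
  have hθ := h.theta_pos
  have hκ := h.curvature_pos
  rw [magVariance]
  field_simp
  ring

/-- The fluctuation of `|mag n x|` around `m` at the scale of the central limit theorem. -/
noncomputable def absMagFluct (m : ℝ) (n : ℕ) (x : Fin n → Bool) : ℝ := √n * (|mag n x| - m)

lemma continuous_smoothedDensity (θ m : ℝ) (n : ℕ) : Continuous (smoothedDensity θ m n) := by
  unfold smoothedDensity absSpinMGF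
  fun_prop

lemma gaussianPDFReal_inv_toNNReal (hθ : 0 < θ) (u v : ℝ) :
    gaussianPDFReal u θ⁻¹.toNNReal v =
      (√(2 * Real.pi * θ⁻¹))⁻¹ * Real.exp (-(θ / 2) * (v - u) ^ 2) := by
  rw [gaussianPDFReal, Real.coe_toNNReal _ (inv_pos.2 hθ).le]
  congr 2
  field_simp

lemma exists_integral_gaussianPDFReal_map_absMagFluct (hθ : 0 < θ) (m : ℝ) {n : ℕ} (hn : 0 < n) :
    ∃ C : ℝ, ∀ v, ∫ u, gaussianPDFReal u θ⁻¹.toNNReal v ∂(cwMeasure n θ).map (absMagFluct m n) =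
      C * smoothedDensity θ m n (m + v / √n) := by
  obtain ⟨C, hC⟩ := exists_integral_exp_cwMeasure_eq_smoothedDensity θ m hn
  refine ⟨(√(2 * Real.pi * θ⁻¹))⁻¹ * C, fun v => ?_⟩
  simp only [gaussianPDFReal_inv_toNNReal hθ]
  rw [integral_const_mul, integral_map (by fun_prop) (by fun_prop), mul_assoc _ C, ← hC v]
  rfl

theorem IsSpontaneousMag.tendstoInDistribution_absMagFluct (h : IsSpontaneousMag θ m) :
    TendstoInDistribution (absMagFluct m) atTop id (fun n => cwMeasure n θ)
      (gaussianReal 0 (magVariance θ m).toNNReal) := by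
  have hθ := h.theta_pos
  have hκ := h.curvature_pos
  have hsum : θ⁻¹.toNNReal + (magVariance θ m).toNNReal =
      (θ * (1 - θ * (1 - m ^ 2)))⁻¹.toNNReal := by
    rw [← Real.toNNReal_add (inv_pos.2 hθ).le h.magVariance_pos.le, h.inv_add_magVariance]
  obtain ⟨c, hc, hbound⟩ := h.exists_smoothedDensity_rescaled_le
  choose! C hC using fun (n : ℕ) (hn : 0 < n) =>
    exists_integral_gaussianPDFReal_map_absMagFluct hθ m hn
  have hmeas : ∀ n, AEMeasurable (absMagFluct m n) (cwMeasure n θ) := fun n => by fun_prop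
  have := fun n => Measure.isProbabilityMeasure_map (hmeas n)
  refine ⟨hmeas, aemeasurable_id, ProbabilityMeasure.tendsto_of_tendsto_charFun fun ξ => ?_⟩
  simp only [ProbabilityMeasure.coe_mk, Measure.map_id]
  have := Real.pi_pos
  refine tendsto_charFun_of_tendsto_gaussianSmoothing
    (A := √(2 * Real.pi * (θ * (1 - θ * (1 - m ^ 2)))⁻¹))
    (H := fun n v => smoothedDensity θ m n (m + v / √n)) (bound := fun v => Real.exp (-c * v ^ 2))
    (by simpa using hθ) (by positivity) (integrable_exp_neg_mul_sq hc) (fun n => ?_)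
    ((eventually_gt_atTop 0).mono hC) ((eventually_gt_atTop 0).mono fun n hn v => ?_)
    (fun v => ?_) ξ
  · exact ((continuous_smoothedDensity θ m n).comp (by fun_prop)).aestronglyMeasurable
  · rw [abs_of_nonneg (smoothedDensity_nonneg θ m n _)]
    exact hbound n hn v
  · rw [hsum, gaussianPDFReal_inv_toNNReal (by positivity), mul_inv_cancel_left₀ (by positivity),
      sub_zero]
    exact h.tendsto_smoothedDensity_rescaled v

end MagnetizationCLT

section ConcaveMaximization

variable {f D : ℝ → ℝ} {a b : ℝ}

lemma isMaxOn_univ_iff_of_antitone_hasDerivAt (hf : ∀ x, HasDerivAt f (D x) x) (hD : Antitone D) :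
    IsMaxOn f Set.univ a ↔ D a = 0 := by
  refine ⟨fun h => (h.isLocalMax univ_mem).hasDerivAt_eq_zero (hf a), fun ha x _ => ?_⟩
  have hcont : Continuous f := continuous_iff_continuousAt.2 fun y => (hf y).continuousAt
  rcases le_total x a with hxa | hax
  · refine monotoneOn_of_hasDerivWithinAt_nonneg (convex_Iic a) hcont.continuousOn
      (fun y _ => (hf y).hasDerivWithinAt) (fun y hy => ?_) hxa Set.self_mem_Iic hxa
    exact ha ▸ hD (Set.mem_Iic.1 (interior_subset hy))
  · refine antitoneOn_of_hasDerivWithinAt_nonpos (convex_Ici a) hcont.continuousOn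
      (fun y _ => (hf y).hasDerivWithinAt) (fun y hy => ?_) Set.self_mem_Ici hax hax
    exact ha ▸ hD (Set.mem_Ici.1 (interior_subset hy))

lemma existsUnique_isMaxOn_univ_of_strictAnti_hasDerivAt (hf : ∀ x, HasDerivAt f (D x) x)
    (hD : StrictAnti D) (ha : 0 < D a) (hb : D b < 0) : ∃! x, IsMaxOn f Set.univ x := by
  simp only [isMaxOn_univ_iff_of_antitone_hasDerivAt hf hD.antitone]
  have hab : a ≤ b := (hD.lt_iff_gt.1 (hb.trans ha)).le
  obtain ⟨c, -, hc⟩ :=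
    exists_hasDerivWithinAt_eq_of_lt_of_gt hab (fun x _ => (hf x).hasDerivWithinAt) ha hb
  exact ⟨c, hc, fun y hy => hD.injective (hy.trans hc.symm)⟩

lemma le_iff_nonpos_of_antitone_of_unique_zero (hD : Antitone D) (ha : D a = 0)
    (huniq : ∀ y, D y = 0 → y = a) : a ≤ b ↔ D b ≤ 0 := by
  refine ⟨fun h => ha ▸ hD h, fun hb => ?_⟩
  by_contra! hlt
  exact hlt.ne (huniq b (hb.antisymm (ha ▸ hD hlt.le)))

end ConcaveMaximization

section Score

variable {n : ℕ} {x : Fin n → Bool}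

lemma abs_spin (b : Bool) : |spin b| = 1 := by cases b <;> simp [spin]

lemma spin_mul_self (b : Bool) : spin b * spin b = 1 := by cases b <;> simp [spin]

lemma abs_mag_le_one (n : ℕ) (x : Fin n → Bool) : |mag n x| ≤ 1 := by
  rw [mag, abs_div, Nat.abs_cast]
  refine div_le_one_of_le₀ ((Finset.abs_sum_le_sum_abs _ _).trans_eq ?_) n.cast_nonneg
  simp [abs_spin]

lemma tfield_eq_mag_sub (n : ℕ) (x : Fin n → Bool) (i : Fin n) :
    tfield n x i = mag n x - spin (x i) / n := by
  have hQ : ∀ j, Qcw n i j * spin (x j) =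
      spin (x j) / n - if i = j then spin (x j) / n else 0 := fun j => by
    rw [Qcw]
    split_ifs <;> ring
  simp only [tfield, mag, hQ, Finset.sum_sub_distrib, Finset.sum_ite_eq, Finset.mem_univ, if_true,
    Finset.sum_div]

lemma qf_Qcw_spin (n : ℕ) (x : Fin n → Bool) :
    qf (Qcw n) (fun i => spin (x i)) = ∑ i, spin (x i) * tfield n x i := by
  simp only [qf, tfield, Finset.mul_sum, mul_assoc]

lemma sum_spin_mul_tfield (hn : 0 < n) (x : Fin n → Bool) :
    ∑ i, spin (x i) * tfield n x i = n * mag n x ^ 2 - 1 := by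
  have hn' : (n : ℝ) ≠ 0 := by positivity
  simp only [tfield_eq_mag_sub, mul_sub, mul_div_assoc', spin_mul_self, Finset.sum_sub_distrib,
    ← Finset.sum_mul, ← natCast_mul_mag, Finset.sum_const, Finset.card_univ, Fintype.card_fin,
    nsmul_eq_mul, mul_one_div_cancel hn']
  ring

lemma tendsto_mul_tanh_mul_atTop (t : ℝ) :
    Tendsto (fun θ => t * Real.tanh (θ * t)) atTop (nhds |t|) := by
  have hpos : ∀ s : ℝ, 0 < s → Tendsto (fun θ => s * Real.tanh (θ * s)) atTop (nhds s) :=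
    fun s hs => by
      simpa using (tendsto_tanh_atTop.comp (tendsto_id.atTop_mul_const hs)).const_mul s
  rcases lt_trichotomy t 0 with ht | rfl | ht
  · simpa [abs_of_neg ht, Real.tanh_neg] using hpos (-t) (neg_pos.2 ht)
  · simp
  · simpa [abs_of_pos ht] using hpos t ht

lemma strictMono_mul_tanh_mul {t : ℝ} (ht : t ≠ 0) :
    StrictMono fun θ => t * Real.tanh (θ * t) := by
  intro a b hab
  rcases ht.lt_or_gt with h | h
  · exact mul_lt_mul_of_neg_left (strictMono_tanh (mul_lt_mul_of_neg_right hab h)) h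
  · exact mul_lt_mul_of_pos_left (strictMono_tanh (mul_lt_mul_of_pos_right hab h)) h

lemma monotone_mul_tanh_mul (t : ℝ) : Monotone fun θ => t * Real.tanh (θ * t) := by
  rcases eq_or_ne t 0 with rfl | ht
  · simpa using monotone_const
  · exact (strictMono_mul_tanh_mul ht).monotone

/-- The derivative of the log pseudo-likelihood `PLobj n x`; its zeros are the maximum
pseudo-likelihood estimators. -/
noncomputable def score (n : ℕ) (x : Fin n → Bool) (θ : ℝ) : ℝ :=
  ∑ i, (spin (x i) * tfield n x i - tfield n x i * Real.tanh (θ * tfield n x i))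

lemma hasDerivAt_PLobj (n : ℕ) (x : Fin n → Bool) (θ : ℝ) :
    HasDerivAt (PLobj n x) (score n x θ) θ := by
  have hlog : ∀ i, HasDerivAt (fun θ => Real.log (Real.cosh (θ * tfield n x i)))
      (tfield n x i * Real.tanh (θ * tfield n x i)) θ := fun i => by
    simpa only [mul_comm] using hasDerivAt_log_cosh_mul (tfield n x i) θ
  refine (((hasDerivAt_id θ).mul_const _).sub
    (HasDerivAt.fun_sum fun i (_ : i ∈ Finset.univ) => hlog i)).congr_deriv ?_
  rw [one_mul, qf_Qcw_spin, score, Finset.sum_sub_distrib]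

lemma antitone_score (n : ℕ) (x : Fin n → Bool) : Antitone (score n x) := fun _ _ hab =>
  Finset.sum_le_sum fun i _ => sub_le_sub_left (monotone_mul_tanh_mul (tfield n x i) hab) _

lemma isMaxOn_PLobj_iff {θ : ℝ} : IsMaxOn (PLobj n x) Set.univ θ ↔ score n x θ = 0 :=
  isMaxOn_univ_iff_of_antitone_hasDerivAt (hasDerivAt_PLobj n x) (antitone_score n x)

lemma strictAnti_score {i : Fin n} (hi : tfield n x i ≠ 0) : StrictAnti (score n x) := by
  refine fun a b hab => Finset.sum_lt_sum (fun j _ => ?_) ⟨i, Finset.mem_univ i, ?_⟩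
  · exact sub_le_sub_left (monotone_mul_tanh_mul (tfield n x j) hab.le) _
  · exact sub_lt_sub_left (strictMono_mul_tanh_mul hi hab) _

lemma spin_mul_le_abs (b : Bool) (t : ℝ) : spin b * t ≤ |t| :=
  (le_abs_self _).trans_eq (by rw [abs_mul, abs_spin, one_mul])

lemma exists_score_neg {i : Fin n} (hi : spin (x i) * tfield n x i < 0) :
    ∃ θ, score n x θ < 0 := by
  have hlim : Tendsto (score n x) atTop
      (nhds (∑ k, (spin (x k) * tfield n x k - |tfield n x k|))) :=
    tendsto_finsetSum _ fun k _ => (tendsto_mul_tanh_mul_atTop _).const_sub _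
  have hneg : ∑ k, (spin (x k) * tfield n x k - |tfield n x k|) < 0 :=
    Finset.sum_neg' (fun k _ => sub_nonpos.2 (spin_mul_le_abs _ _))
      ⟨i, Finset.mem_univ i, by linarith [abs_nonneg (tfield n x i)]⟩
  exact (hlim.eventually (gt_mem_nhds hneg)).exists

lemma exists_score_pos {i : Fin n} (hi : 0 < spin (x i) * tfield n x i) :
    ∃ θ, 0 < score n x θ := by
  have hlim : Tendsto (fun θ => score n x (-θ)) atTop
      (nhds (∑ k, (spin (x k) * tfield n x k + |tfield n x k|))) :=
    tendsto_finsetSum _ fun k _ => by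
      simpa [Real.tanh_neg] using (tendsto_mul_tanh_mul_atTop (tfield n x k)).const_add _
  have hpos : 0 < ∑ k, (spin (x k) * tfield n x k + |tfield n x k|) := by
    refine Finset.sum_pos' (fun k _ => ?_) ⟨i, Finset.mem_univ i, by positivity⟩
    simpa [neg_le_iff_add_nonneg'] using spin_mul_le_abs (x k) (-tfield n x k)
  obtain ⟨θ, hθ⟩ := (hlim.eventually (lt_mem_nhds hpos)).exists
  exact ⟨-θ, hθ⟩

lemma exists_spin_mul_tfield_pos (hn : 0 < n) (h : 1 < n * mag n x ^ 2) :
    ∃ i, 0 < spin (x i) * tfield n x i := by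
  have hsum : ∑ _i : Fin n, (0 : ℝ) < ∑ i, spin (x i) * tfield n x i := by
    rw [sum_spin_mul_tfield hn, Finset.sum_const_zero]
    linarith
  simpa using Finset.exists_lt_of_sum_lt hsum

lemma exists_spin_mul_tfield_neg (hn : 0 < n) (h0 : mag n x ≠ 0) (h1 : |mag n x| < 1) :
    ∃ i, spin (x i) * tfield n x i < 0 := by
  by_contra! hnonneg
  have hn' : (0 : ℝ) < n := by positivity
  have haligned : ∀ i, spin (x i) * mag n x = |mag n x| := fun i => by
    have hi := hnonneg i
    rw [tfield_eq_mag_sub, mul_sub, mul_div_assoc', spin_mul_self, sub_nonneg] at hi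
    rw [← abs_of_nonneg ((one_div_pos.2 hn').le.trans hi), abs_mul, abs_spin, one_mul]
  have hsum : n * mag n x * mag n x = n * |mag n x| := by
    rw [natCast_mul_mag, Finset.sum_mul, Finset.sum_congr rfl fun i _ => haligned i]
    simp
  rw [mul_assoc, ← abs_mul_abs_self] at hsum
  have habs := abs_pos.2 h0
  exact (mul_lt_of_lt_one_left habs h1).ne (mul_left_cancel₀ hn'.ne' hsum)

lemma existsUnique_isMaxOn_PLobj (h : 1 < n * mag n x ^ 2) (h1 : |mag n x| < 1) :
    ∃! θ, IsMaxOn (PLobj n x) Set.univ θ := by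
  have hn : 0 < n := Nat.pos_of_ne_zero (by rintro rfl; norm_num at h)
  have h0 : mag n x ≠ 0 := fun h0 => by norm_num [h0] at h
  obtain ⟨i, hi⟩ := exists_spin_mul_tfield_neg hn h0 h1
  obtain ⟨j, hj⟩ := exists_spin_mul_tfield_pos hn h
  obtain ⟨a, ha⟩ := exists_score_pos hj
  obtain ⟨b, hb⟩ := exists_score_neg hi
  exact existsUnique_isMaxOn_univ_of_strictAnti_hasDerivAt (hasDerivAt_PLobj n x)
    (strictAnti_score (right_ne_zero_of_mul hi.ne)) ha hb

lemma abs_mul_tanh_mul_sub_le (τ : ℝ) {s t : ℝ} (hs : |s| ≤ 1) :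
    |t * Real.tanh (τ * t) - s * Real.tanh (τ * s)| ≤ (1 + |τ|) * |t - s| :=
  calc |t * Real.tanh (τ * t) - s * Real.tanh (τ * s)|
      = |(t - s) * Real.tanh (τ * t) + s * (Real.tanh (τ * t) - Real.tanh (τ * s))| := by
        congr 1; ring
    _ ≤ |t - s| * |Real.tanh (τ * t)| + |s| * |Real.tanh (τ * t) - Real.tanh (τ * s)| :=
        (abs_add_le _ _).trans_eq (by simp only [abs_mul])
    _ ≤ |t - s| * 1 + 1 * |τ * t - τ * s| := by
        exact add_le_add
          (mul_le_mul_of_nonneg_left (Real.abs_tanh_lt_one _).le (abs_nonneg _))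
          (mul_le_mul hs (abs_tanh_sub_tanh_le _ _) (abs_nonneg _) zero_le_one)
    _ = (1 + |τ|) * |t - s| := by rw [← mul_sub, abs_mul]; ring

lemma abs_score_sub_le (hn : 0 < n) (x : Fin n → Bool) (τ : ℝ) :
    |score n x τ - n * (|mag n x| * (|mag n x| - Real.tanh (τ * |mag n x|)))| ≤ 2 + |τ| := by
  have : (0 : ℝ) < n := by positivity
  have heven : |mag n x| * (|mag n x| - Real.tanh (τ * |mag n x|)) =
      mag n x * (mag n x - Real.tanh (τ * mag n x)) := by
    rcases abs_choice (mag n x) with h | h <;> rw [h]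
    rw [mul_neg, Real.tanh_neg]
    ring
  have hsplit : score n x τ - n * (mag n x * (mag n x - Real.tanh (τ * mag n x))) = -(1 + ∑ i,
      (tfield n x i * Real.tanh (τ * tfield n x i) - mag n x * Real.tanh (τ * mag n x))) := by
    simp only [score, Finset.sum_sub_distrib, sum_spin_mul_tfield hn, Finset.sum_const,
      Finset.card_univ, Fintype.card_fin, nsmul_eq_mul]
    ring
  have hdiff : ∀ i, |tfield n x i - mag n x| = 1 / n := fun i => by
    rw [tfield_eq_mag_sub, sub_sub_cancel_left, abs_neg, abs_div, abs_spin, Nat.abs_cast]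
  rw [heven, hsplit, abs_neg]
  calc |1 + ∑ i, (tfield n x i * Real.tanh (τ * tfield n x i) - mag n x * Real.tanh (τ * mag n x))|
      ≤ 1 + ∑ i,
        |tfield n x i * Real.tanh (τ * tfield n x i) - mag n x * Real.tanh (τ * mag n x)| := by
        refine (abs_add_le _ _).trans ?_
        rw [abs_one]
        gcongr
        exact Finset.abs_sum_le_sum_abs _ _
    _ ≤ 1 + ∑ _i : Fin n, (1 + |τ|) * (1 / n) := by
        gcongr with i
        exact hdiff i ▸ abs_mul_tanh_mul_sub_le τ (abs_mag_le_one n x)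
    _ = 2 + |τ| := by
        rw [Finset.sum_const, Finset.card_univ, Fintype.card_fin, nsmul_eq_mul]
        field_simp
        ring

end Score

section ScoreLimit

variable {θ m : ℝ}

/-- The leading part `√n * (M * (M - tanh (τ * M)))` of the score at `τ = θ + t / √n`, normalized
by `√n`, as a function of `u = √n * (M - m)` and `r = 1 / √n`. Writing the increment of `tanh` at
`θ * m` through `dslope` cancels the factor `√n`, so that the value at `r = 0` is the limit. -/
noncomputable def normalizedScore (θ m t u r : ℝ) : ℝ :=
  (m + u * r) * (u - dslope Real.tanh (θ * m) ((θ + t * r) * (m + u * r)) *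
    (θ * u + t * m + t * u * r))

lemma continuous_normalizedScore (θ m t : ℝ) :
    Continuous fun p : ℝ × ℝ => normalizedScore θ m t p.1 p.2 := by
  have hdslope : Continuous (dslope Real.tanh (θ * m)) := by
    rw [← continuousOn_univ, continuousOn_dslope univ_mem]
    exact ⟨differentiable_tanh.continuous.continuousOn, differentiable_tanh _⟩
  unfold normalizedScore
  fun_prop

lemma IsSpontaneousMag.mul_normalizedScore (h : IsSpontaneousMag θ m) (t u r : ℝ) :
    r * normalizedScore θ m t u r =
      (m + u * r) * (m + u * r - Real.tanh ((θ + t * r) * (m + u * r))) := by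
  have hslope := sub_smul_dslope Real.tanh (θ * m) ((θ + t * r) * (m + u * r))
  rw [h.tanh_mul, smul_eq_mul] at hslope
  rw [normalizedScore]
  linear_combination -(m + u * r) * hslope

lemma IsSpontaneousMag.normalizedScore_zero (h : IsSpontaneousMag θ m) (t u : ℝ) :
    normalizedScore θ m t u 0 =
      m * (1 - θ * (1 - m ^ 2)) * (u - m * magVariance θ m * t) := by
  have hvar : (1 - θ * (1 - m ^ 2)) * magVariance θ m = 1 - m ^ 2 :=
    mul_div_cancel₀ _ h.curvature_pos.ne'
  simp only [normalizedScore, mul_zero, add_zero, dslope_same, deriv_tanh, h.tanh_mul]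
  linear_combination m ^ 2 * t * hvar

lemma tendsto_inv_sqrt_natCast : Tendsto (fun n : ℕ => (√(n : ℝ))⁻¹) atTop (nhds 0) :=
  tendsto_inv_atTop_zero.comp (Real.tendsto_sqrt_atTop.comp tendsto_natCast_atTop_atTop)

lemma abs_mag_eq (m : ℝ) {n : ℕ} (hn : 0 < n) (x : Fin n → Bool) :
    |mag n x| = m + absMagFluct m n x * (√n)⁻¹ := by
  have : (0 : ℝ) < √n := by positivity
  rw [absMagFluct]
  field_simp
  ring

lemma IsSpontaneousMag.tendstoInDistribution_comp_absMagFluct (h : IsSpontaneousMag θ m)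
    {g : ℝ × ℝ → ℝ} (hg : Continuous g) :
    TendstoInDistribution (fun n x => g (absMagFluct m n x, (√n)⁻¹)) atTop (fun u => g (u, 0))
      (fun n => cwMeasure n θ) (gaussianReal 0 (magVariance θ m).toNNReal) := by
  have hzero := h.tendstoInDistribution_absMagFluct.continuous_comp
    (g := fun u : ℝ => (u, (0 : ℝ))) (by fun_prop)
  refine (tendstoInDistribution_of_dist_le hzero (fun n => ?_)
    (Eventually.of_forall fun n x => ?_) tendsto_inv_sqrt_natCast).continuous_comp hg
  · exact (measurable_of_finite fun x => (absMagFluct m n x, (√n)⁻¹)).aemeasurable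
  · simp [Prod.dist_eq, abs_of_nonneg]

lemma IsSpontaneousMag.abs_score_div_sqrt_sub_le (h : IsSpontaneousMag θ m) (t : ℝ) {n : ℕ}
    (hn : 0 < n) (x : Fin n → Bool) :
    |score n x (θ + t / √n) / √n - normalizedScore θ m t (absMagFluct m n x) (√n)⁻¹| ≤
      (2 + |θ + t / √n|) * (√n)⁻¹ := by
  have hr : (0 : ℝ) < √n := by positivity
  have hscore := h.mul_normalizedScore t (absMagFluct m n x) (√n)⁻¹
  rw [← abs_mag_eq m hn, ← div_eq_mul_inv] at hscore
  have hbound := abs_score_sub_le hn x (θ + t / √n)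
  rw [← hscore] at hbound
  calc |score n x (θ + t / √n) / √n - normalizedScore θ m t (absMagFluct m n x) (√n)⁻¹|
      = |score n x (θ + t / √n) -
          n * ((√n)⁻¹ * normalizedScore θ m t (absMagFluct m n x) (√n)⁻¹)| * (√n)⁻¹ := by
        rw [← abs_of_pos (inv_pos.2 hr), ← abs_mul, abs_of_pos (inv_pos.2 hr)]
        congr 1
        nth_rw 5 [← Real.mul_self_sqrt n.cast_nonneg]
        field_simp
    _ ≤ (2 + |θ + t / √n|) * (√n)⁻¹ := by gcongr

lemma IsSpontaneousMag.tendstoInDistribution_score (h : IsSpontaneousMag θ m) (t : ℝ) :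
    TendstoInDistribution (fun n x => score n x (θ + t / √n) / √n) atTop
      (fun u => m * (1 - θ * (1 - m ^ 2)) * (u - m * magVariance θ m * t))
      (fun n => cwMeasure n θ) (gaussianReal 0 (magVariance θ m).toNNReal) := by
  simp only [← h.normalizedScore_zero]
  refine tendstoInDistribution_of_dist_le (ε := fun n : ℕ => (2 + |θ + t / √n|) * (√n)⁻¹)
    (h.tendstoInDistribution_comp_absMagFluct (continuous_normalizedScore θ m t))
    (fun n => (measurable_of_finite _).aemeasurable)
    ((eventually_gt_atTop 0).mono fun n hn x => h.abs_score_div_sqrt_sub_le t hn x) ?_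
  simpa [div_eq_mul_inv] using (((tendsto_inv_sqrt_natCast.const_mul t).const_add θ).abs.const_add
    2).mul tendsto_inv_sqrt_natCast

lemma IsSpontaneousMag.tendsto_measure_score_nonpos (h : IsSpontaneousMag θ m) (t : ℝ) :
    Tendsto (fun n : ℕ => cwMeasure n θ {x | score n x (θ + t / √n) ≤ 0}) atTop
      (nhds (gaussianReal 0 (magVariance θ m).toNNReal (Set.Iic (m * magVariance θ m * t)))) := by
  have hslope : 0 < m * (1 - θ * (1 - m ^ 2)) := mul_pos h.pos h.curvature_pos
  have := nullSingletonClass_gaussianReal (μ := 0) (Real.toNNReal_pos.2 h.magVariance_pos).ne'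
  have hzero : (fun u => m * (1 - θ * (1 - m ^ 2)) * (u - m * magVariance θ m * t)) ⁻¹' {0} =
      {m * magVariance θ m * t} := by
    ext u
    simp [hslope.ne', sub_eq_zero]
  have hnonpos : (fun u => m * (1 - θ * (1 - m ^ 2)) * (u - m * magVariance θ m * t)) ⁻¹'
      Set.Iic 0 = Set.Iic (m * magVariance θ m * t) := by
    ext u
    simp [mul_nonpos_iff, hslope.le, hslope.not_ge]
  have hlim := tendsto_measure_preimage_of_tendstoInDistribution (h.tendstoInDistribution_score t)
    measurableSet_Iic (s := Set.Iic 0) (by rw [frontier_Iic, hzero, measure_singleton])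
  rw [hnonpos] at hlim
  refine hlim.congr' ((eventually_gt_atTop 0).mono fun n hn => ?_)
  have hr : (0 : ℝ) < √n := by positivity
  congr 1
  ext x
  simp [div_le_iff₀ hr]

lemma IsSpontaneousMag.tendsto_measure_abs_mag_mem_Ioo (h : IsSpontaneousMag θ m) {a b : ℝ}
    (ha : a < m) (hb : m < b) :
    Tendsto (fun n : ℕ => cwMeasure n θ {x | |mag n x| ∈ Set.Ioo a b}) atTop (nhds 1) := by
  have hlim := tendsto_measure_preimage_of_tendstoInDistribution
    (h.tendstoInDistribution_comp_absMagFluct (g := fun p => m + p.1 * p.2) (by fun_prop))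
    (s := Set.Ioo a b) measurableSet_Ioo
    (by simp [frontier_Ioo (ha.trans hb), ha.ne', hb.ne])
  simp only [mul_zero, add_zero, Set.preimage_const_of_mem (Set.mem_Ioo.2 ⟨ha, hb⟩),
    measure_univ] at hlim
  refine hlim.congr' ((eventually_gt_atTop 0).mono fun n hn => ?_)
  simp only [Set.preimage, abs_mag_eq m hn]

end ScoreLimit

section Estimator

variable {θ m : ℝ}

lemma IsSpontaneousMag.tendsto_measure_existsUnique_isMaxOn (h : IsSpontaneousMag θ m) :
    Tendsto (fun n : ℕ => cwMeasure n θ {x | ∃! θh, IsMaxOn (PLobj n x) Set.univ θh})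
      atTop (nhds 1) := by
  have hlarge := ((tendsto_natCast_atTop_atTop (R := ℝ)).atTop_mul_const
    (pow_pos (half_pos h.pos) 2)).eventually_gt_atTop 1
  refine tendsto_of_tendsto_of_tendsto_of_le_of_le'
    (h.tendsto_measure_abs_mag_mem_Ioo (half_lt_self h.pos) h.lt_one) tendsto_const_nhds
    (hlarge.mono fun n hn => measure_mono fun x hx => ?_)
    (Eventually.of_forall fun n => prob_le_one)
  refine existsUnique_isMaxOn_PLobj (hn.trans_le ?_) hx.2
  rw [← sq_abs (mag n x)]
  have := half_pos h.pos
  gcongr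
  exact hx.1.le

lemma setOf_sqrt_mul_sub_le_eq_inter (θ t : ℝ) {n : ℕ} (hn : 0 < n) :
    {x | ∃ θh, (IsMaxOn (PLobj n x) Set.univ θh ∧
      ∀ θ', IsMaxOn (PLobj n x) Set.univ θ' → θ' = θh) ∧ √n * (θh - θ) ≤ t} =
    {x | ∃! θh, IsMaxOn (PLobj n x) Set.univ θh} ∩ {x | score n x (θ + t / √n) ≤ 0} := by
  have hr : (0 : ℝ) < √n := by positivity
  have hle : ∀ θh, √n * (θh - θ) ≤ t ↔ θh ≤ θ + t / √n := fun θh => by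
    rw [← le_div_iff₀' hr, sub_le_iff_le_add']
  ext x
  simp only [ExistsUnique, isMaxOn_PLobj_iff, hle, Set.mem_ofPred_eq, Set.mem_inter_iff,
    ← exists_and_right]
  exact exists_congr fun θh => and_congr_right fun hθh =>
    le_iff_nonpos_of_antitone_of_unique_zero (antitone_score n x) hθh.1 hθh.2

lemma tendsto_measure_inter_of_tendsto_one {ι : Type*} {Ω : ι → Type*}
    [∀ i, MeasurableSpace (Ω i)] {P : (i : ι) → Measure (Ω i)} [∀ i, IsProbabilityMeasure (P i)]
    {l : Filter ι} {A B : (i : ι) → Set (Ω i)} {p : ENNReal} (hA : ∀ i, MeasurableSet (A i))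
    (hA1 : Tendsto (fun i => P i (A i)) l (nhds 1)) (hB : Tendsto (fun i => P i (B i)) l (nhds p)) :
    Tendsto (fun i => P i (A i ∩ B i)) l (nhds p) := by
  have hcompl : Tendsto (fun i => P i (A i)ᶜ) l (nhds 0) := by
    simpa [prob_compl_eq_one_sub (hA _)] using
      ENNReal.Tendsto.sub tendsto_const_nhds hA1 (.inl ENNReal.one_ne_top)
  have hlower : Tendsto (fun i => P i (B i) - P i (A i)ᶜ) l (nhds p) := by
    simpa using ENNReal.Tendsto.sub hB hcompl (.inr ENNReal.zero_ne_top)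
  refine tendsto_of_tendsto_of_tendsto_of_le_of_le hlower hB (fun i => ?_)
    fun i => measure_mono Set.inter_subset_right
  rw [tsub_le_iff_right]
  refine (measure_mono fun ω hω => ?_).trans (measure_union_le _ _)
  by_cases hωA : ω ∈ A i
  · exact .inl ⟨hωA, hω⟩
  · exact .inr hωA

lemma gaussianReal_Iic_mul_variance {m s : ℝ} (hm : 0 < m) (hs : 0 < s) (t : ℝ) :
    gaussianReal 0 s.toNNReal (Set.Iic (m * s * t)) =
      gaussianReal 0 1 (Set.Iic (t * √(m ^ 2 * s))) := by
  have hsqrt : 0 < √s := Real.sqrt_pos.2 hs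
  have hv : NNReal.mk (√s ^ 2) (sq_nonneg _) = s.toNNReal := by
    ext
    simp [Real.sq_sqrt hs.le, hs.le]
  have hmap := gaussianReal_map_const_mul (μ := 0) (v := 1) (√s)
  rw [mul_zero, mul_one, hv] at hmap
  rw [← hmap, Measure.map_apply (by fun_prop) measurableSet_Iic]
  congr 1
  ext y
  have hscale : m * s * t = √s * (t * (m * √s)) := by
    linear_combination -(m * t) * Real.mul_self_sqrt hs.le
  rw [Set.mem_preimage, Set.mem_Iic, Set.mem_Iic, Real.sqrt_mul (by positivity),
    Real.sqrt_sq hm.le, hscale, mul_le_mul_iff_right₀ hsqrt]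

end Estimator

theorem stmt19 (θ₀ : ℝ) (hθ : 1 < θ₀) (m : ℝ → ℝ)
    (hm : ∀ θ : ℝ, 1 < θ → 0 < m θ ∧ Real.tanh (θ * m θ) = m θ) :
    Tendsto (fun n : ℕ =>
        cwMeasure n θ₀ {x | ∃! θh : ℝ, IsMaxOn (PLobj n x) Set.univ θh})
      atTop (nhds 1) ∧
    ∀ t : ℝ,
      Tendsto (fun n : ℕ =>
          cwMeasure n θ₀ {x | ∃ θh : ℝ,
            (IsMaxOn (PLobj n x) Set.univ θh ∧
              ∀ θ' : ℝ, IsMaxOn (PLobj n x) Set.univ θ' → θ' = θh) ∧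
            Real.sqrt (n : ℝ) * (θh - θ₀) ≤ t})
        atTop
        (nhds (gaussianReal 0 1 (Set.Iic (t *
          Real.sqrt (m θ₀ ^ 2 * ((1 - m θ₀ ^ 2) / (1 - θ₀ * (1 - m θ₀ ^ 2)))))))) := by
  obtain ⟨hpos, htanh⟩ := hm θ₀ hθ
  have h : IsSpontaneousMag θ₀ (m θ₀) := ⟨hpos, htanh⟩
  refine ⟨h.tendsto_measure_existsUnique_isMaxOn, fun t => ?_⟩
  have hlim := tendsto_measure_inter_of_tendsto_one (fun n => MeasurableSet.of_discrete)
    h.tendsto_measure_existsUnique_isMaxOn (h.tendsto_measure_score_nonpos t)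
  rw [gaussianReal_Iic_mul_variance h.pos h.magVariance_pos] at hlim
  refine hlim.congr' ((eventually_gt_atTop 0).mono fun n hn => ?_)
  exact congrArg _ (setOf_sqrt_mul_sub_le_eq_inter θ₀ t hn).symm
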